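/- Let k be a positive integer, let (α,β) be one of (14,6), (18,8), (20,8), and let C be a self-dual Z4-code of length 24k+α with minimum Lee weight 8k+β. Then every binary self-dual code containing the residue code C^(1) is an s-extremal self-dual code with minimum Hamming weight 4k+4. -/

import Mathlib

open Finset

namespace Z4Note

variable {ι : Type*} [Fintype ι]

/-- Hamming weight of a binary vector. -/
def hWt (x : ι → ZMod 2) : ℕ := (Finset.univ.filter fun i => x i ≠ 0).card

/-- Lee value of an element of `ZMod 4`:  0 ↦ 0, 1 ↦ 1, 2 ↦ 2, 3 ↦ 1. -/
def leeVal (a : ZMod 4) : ℕ := min a.val (4 - a.val)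

/-- Lee weight `n₁(x) + 2 n₂(x) + n₃(x)`. -/
def leeWt (x : ι → ZMod 4) : ℕ := ∑ i, leeVal (x i)

/-- Euclidean weight `n₁(x) + 4 n₂(x) + n₃(x)`. -/
def eucWt (x : ι → ZMod 4) : ℕ := ∑ i, (leeVal (x i)) ^ 2

/-- Number of coordinates of `x` equal to `a`. -/
def nCount (a : ZMod 4) (x : ι → ZMod 4) : ℕ := (Finset.univ.filter fun i => x i = a).card

/-- Dual of a `ZMod 4`-code (as a set), w.r.t. the standard inner product. -/
def dualZ4 (C : Set (ι → ZMod 4)) : Set (ι → ZMod 4) :=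
  {x | ∀ y ∈ C, ∑ i, x i * y i = 0}

/-- Dual of a binary code (as a set), w.r.t. the standard inner product. -/
def dual2 (C : Set (ι → ZMod 2)) : Set (ι → ZMod 2) :=
  {x | ∀ y ∈ C, ∑ i, x i * y i = 0}

/-- A `ZMod 4`-code is self-dual if it equals its dual. -/
def SelfDualZ4 (C : Submodule (ZMod 4) (ι → ZMod 4)) : Prop :=
  (C : Set (ι → ZMod 4)) = dualZ4 (C : Set (ι → ZMod 4))

/-- A binary code is self-dual if it equals its dual. -/
def SelfDual2 (D : Submodule (ZMod 2) (ι → ZMod 2)) : Prop :=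
  (D : Set (ι → ZMod 2)) = dual2 (D : Set (ι → ZMod 2))

/-- Coordinatewise reduction modulo 2. -/
def res2 (x : ι → ZMod 4) : ι → ZMod 2 :=
  fun i => ZMod.castHom (by norm_num : (2:ℕ) ∣ 4) (ZMod 2) (x i)

/-- The residue code `C⁽¹⁾ = {c mod 2 : c ∈ C}`. -/
def residue (C : Set (ι → ZMod 4)) : Set (ι → ZMod 2) := res2 '' C

/-- Minimum Lee weight among nonzero codewords. -/
noncomputable def minLee (C : Set (ι → ZMod 4)) : ℕ := sInf {d | ∃ x ∈ C, x ≠ 0 ∧ leeWt x = d}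

/-- Minimum Euclidean weight among nonzero codewords. -/
noncomputable def minEuc (C : Set (ι → ZMod 4)) : ℕ := sInf {d | ∃ x ∈ C, x ≠ 0 ∧ eucWt x = d}

/-- Minimum Hamming weight among nonzero codewords of a binary code. -/
noncomputable def minHam (C : Set (ι → ZMod 2)) : ℕ := sInf {d | ∃ x ∈ C, x ≠ 0 ∧ hWt x = d}

/-- A binary code is doubly even if all weights are divisible by 4. -/
def DoublyEven (C : Set (ι → ZMod 2)) : Prop := ∀ x ∈ C, 4 ∣ hWt x

/-- A binary code is singly even if some codeword has weight not divisible by 4. -/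
def SinglyEven (C : Set (ι → ZMod 2)) : Prop := ∃ x ∈ C, ¬ 4 ∣ hWt x

/-- A self-dual `ZMod 4`-code is Type II if all Euclidean weights are divisible by 8. -/
def TypeII (C : Set (ι → ZMod 4)) : Prop := ∀ x ∈ C, 8 ∣ eucWt x

/-- The doubly even subcode of a binary code. -/
def evenSubcode (D : Set (ι → ZMod 2)) : Set (ι → ZMod 2) := {x ∈ D | 4 ∣ hWt x}

/-- The shadow `S = D₀^⊥ \ D` of a binary code. -/
def shadow (D : Set (ι → ZMod 2)) : Set (ι → ZMod 2) := dual2 (evenSubcode D) \ D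

/-- A binary singly even self-dual code is s-extremal if equality holds in the
Bachoc–Gaborit bound relating the minimum weight of the code and of its shadow. -/
def SExtremal (D : Submodule (ZMod 2) (ι → ZMod 2)) : Prop :=
  SelfDual2 D ∧ SinglyEven (D : Set (ι → ZMod 2)) ∧
  ((¬ (Fintype.card ι % 24 = 22 ∧
        minHam (D : Set (ι → ZMod 2)) = 4 * (Fintype.card ι / 24) + 6)) →
      minHam (shadow (D : Set (ι → ZMod 2))) + 2 * minHam (D : Set (ι → ZMod 2)) =
        Fintype.card ι / 2 + 4) ∧
  ((Fintype.card ι % 24 = 22 ∧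
        minHam (D : Set (ι → ZMod 2)) = 4 * (Fintype.card ι / 24) + 6) →
      minHam (shadow (D : Set (ι → ZMod 2))) + 2 * minHam (D : Set (ι → ZMod 2)) =
        Fintype.card ι / 2 + 8)

/-- Equivalence of `ZMod 4`-codes: coordinate permutation together with sign changes. -/
def Z4Equiv (C C' : Set (ι → ZMod 4)) : Prop :=
  ∃ σ : Equiv.Perm ι, ∃ ε : ι → ZMod 4, (∀ i, ε i = 1 ∨ ε i = -1) ∧
    C' = (fun x => fun i => ε i * x (σ i)) '' C

/-- Covering radius of a binary code. -/
noncomputable def covRad (C : Set (ι → ZMod 2)) : ℕ :=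
  sInf {R | ∀ v : ι → ZMod 2, ∃ c ∈ C, hWt (v - c) ≤ R}

/-- Entry `(i,j)` of the circulant matrix with first row `r`. -/
def circEntry {m : ℕ} (r : Fin m → ZMod 4) (i j : Fin m) : ZMod 4 := r (j - i)

/-- Entry `(i,j)` of the negacirculant matrix with first row `r`. -/
def negaEntry {m : ℕ} (r : Fin m → ZMod 4) (i j : Fin m) : ZMod 4 :=
  if i.val ≤ j.val then r (j - i) else - r (j - i)

/-- The bordered part `B` of the generator matrix of a bordered double circulant code. -/
def bdcB {m : ℕ} (α β γ : ZMod 4) (r : Fin m → ZMod 4) :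
    Fin (m+1) → Fin (m+1) → ZMod 4 :=
  Fin.cases (Fin.cases α fun _ => β) (fun i' => Fin.cases γ fun j' => circEntry r i' j')

/-- Row `i` of the generator matrix `(I | B)` of a bordered double circulant code. -/
def bdcRow {m : ℕ} (α β γ : ZMod 4) (r : Fin m → ZMod 4) (i : Fin (m+1)) :
    (Fin (m+1) ⊕ Fin (m+1)) → ZMod 4 :=
  Sum.elim (fun j => if j = i then 1 else 0) (bdcB α β γ r i)

/-- The bordered double circulant code of length `2(m+1)`. -/
def bdcCode {m : ℕ} (α β γ : ZMod 4) (r : Fin m → ZMod 4) :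
    Submodule (ZMod 4) ((Fin (m+1) ⊕ Fin (m+1)) → ZMod 4) :=
  Submodule.span (ZMod 4) (Set.range (bdcRow α β γ r))

/-- The block matrix `[[A, B], [-Bᵀ, Aᵀ]]` built from negacirculant `A`, `B`. -/
def fourNegaM {n : ℕ} (a b : Fin n → ZMod 4) :
    (Fin n ⊕ Fin n) → (Fin n ⊕ Fin n) → ZMod 4
  | Sum.inl i, Sum.inl j => negaEntry a i j
  | Sum.inl i, Sum.inr j => negaEntry b i j
  | Sum.inr i, Sum.inl j => - negaEntry b j i
  | Sum.inr i, Sum.inr j => negaEntry a j i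

/-- Row `i` of the generator matrix `(I | M)` of a four-negacirculant code. -/
def fourNegaRow {n : ℕ} (a b : Fin n → ZMod 4) (i : Fin n ⊕ Fin n) :
    ((Fin n ⊕ Fin n) ⊕ (Fin n ⊕ Fin n)) → ZMod 4 :=
  Sum.elim (fun j => if j = i then 1 else 0) (fourNegaM a b i)

/-- The four-negacirculant code of length `4n`. -/
def fourNegaCode {n : ℕ} (a b : Fin n → ZMod 4) :
    Submodule (ZMod 4) (((Fin n ⊕ Fin n) ⊕ (Fin n ⊕ Fin n)) → ZMod 4) :=
  Submodule.span (ZMod 4) (Set.range (fourNegaRow a b))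

end Z4Note

/-!
Doubling a binary vector `v` orthogonal to the residue code gives a codeword of `C` of Lee weight
`2 * hWt v`. This applies to the words of a self-dual `D ⊇ C⁽¹⁾` and, since the residue code is
doubly even, to the vectors `v` with `v ⬝ c ≡ wt c / 2 (mod 2)` for all `c ∈ D`, which form the
shadow of `D` if `D` is singly even. So the minimum Lee weight bounds both minimum weights from
below, and it remains to bound them from above.

By Gleason's theorem the weight enumerator of `D`, as a polynomial in `X = y²` of degree at most
`N = n / 2`, is a combination of `(1 + X) ^ (N - 4 i) * (X * (1 - X) ^ 2) ^ i`, and by the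
MacWilliams identity the enumerator of the shadow is, up to nonzero scalars, the combination of
`X ^ (N - 4 i) * (1 - X ^ 4) ^ (2 i)` with the same coefficients. If the shadow had no words of
weight at most `N - 4 m`, the first combination would stop before `i = m`; if moreover `D` had no
nonzero words of weight at most `2 m`, it would be congruent to `1` modulo `X ^ (m + 1)`, and
Lagrange inversion would make a coefficient of `(1 + X) ^ (-s) * (1 - X) ^ (-2 m)`, with
`s = N + 1 - 4 m`, vanish. No coefficient does if `s ≠ 2 m`.
-/

namespace Z4Note

section LagrangeInversion

open PowerSeries

lemma coeff_X_mul_derivative {R : Type*} [CommSemiring R] (n : ℕ) (f : R⟦X⟧) :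
    coeff n (X * d⁄dX R f) = n * coeff n f := by
  cases n with
  | zero => simp
  | succ n => rw [coeff_succ_X_mul, coeff_derivative, mul_comm, Nat.cast_succ]

lemma X_pow_dvd_derivative {R : Type*} [CommSemiring R] {n : ℕ} {f : R⟦X⟧}
    (hf : X ^ (n + 1) ∣ f) : X ^ n ∣ d⁄dX R f := by
  rw [X_pow_dvd_iff] at hf ⊢
  intro j hj
  rw [coeff_derivative, hf (j + 1) (by lia), zero_mul]

variable {R : Type*} [CommRing R]

lemma coeff_eq_of_X_pow_dvd_sub {f g : R⟦X⟧} {n j : ℕ} (hj : j < n) (h : X ^ n ∣ f - g) :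
    coeff j f = coeff j g := by
  rw [← sub_eq_zero, ← map_sub]
  exact X_pow_dvd_iff.mp h j hj

lemma natCast_mul_derivative_mul_pow_succ {g h : R⟦X⟧} (hgh : h * g = 1) (j : ℕ) :
    (j : R⟦X⟧) * (d⁄dX R h * g ^ (j + 1)) = -d⁄dX R (g ^ j) := by
  have hder : h * d⁄dX R g + g * d⁄dX R h = 0 := by
    simpa using congrArg (d⁄dX R) hgh
  cases j with
  | zero => simp
  | succ j =>
    simp only [derivative_pow, add_tsub_cancel_right]
    push_cast
    linear_combination (j + 1 : R⟦X⟧) * g ^ (j + 1) * hder -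
      (j + 1 : R⟦X⟧) * g ^ j * d⁄dX R g * hgh

/-- The coefficient of `X ^ (i + j)` on the right vanishes, as `X * d⁄dX` multiplies `j`-th
coefficients by `j`; the factor `j` on the left avoids dividing by it. -/
lemma natCast_mul_derivative_X_mul_pow_mul_pow {g h : R⟦X⟧} (hgh : h * g = 1) (i j : ℕ) :
    (j : R⟦X⟧) * (d⁄dX R ((X * h) ^ (i + 1)) * g ^ (i + 1 + j)) =
      X ^ i * (((i + 1 : ℕ) : R⟦X⟧) * ((j : R⟦X⟧) * g ^ j - X * d⁄dX R (g ^ j))) := by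
  have hpow : h ^ i * g ^ i = 1 := by rw [← mul_pow, hgh, one_pow]
  rw [derivative_pow]
  simp only [Derivation.leibniz, derivative_X, smul_eq_mul, add_tsub_cancel_right, mul_pow]
  push_cast
  linear_combination (i + 1 : R⟦X⟧) * X ^ i * X * natCast_mul_derivative_mul_pow_succ hgh j +
    (i + 1 : R⟦X⟧) * X ^ i * j * g ^ j * hgh +
    (i + 1 : R⟦X⟧) * j * X ^ i * (h + X * d⁄dX R h) * g ^ (j + 1) * hpow

lemma coeff_derivative_X_mul_pow_mul_pow [CharZero R] [NoZeroDivisors R] {g h : R⟦X⟧}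
    (hgh : h * g = 1) {i m : ℕ} (him : i < m) :
    coeff (m - 1) (d⁄dX R ((X * h) ^ i) * g ^ m) = 0 := by
  cases i with
  | zero => simp
  | succ i =>
    obtain ⟨j, rfl⟩ := Nat.exists_eq_add_of_lt him
    have hcoeff := congrArg (coeff (R := R) (j + 1 + i))
      (natCast_mul_derivative_X_mul_pow_mul_pow hgh i (j + 1))
    simp only [coeff_X_pow_mul, ← nsmul_eq_mul, map_nsmul, map_sub, coeff_X_mul_derivative,
      sub_self, smul_zero] at hcoeff
    have hindex : i + 1 + j + 1 - 1 = j + 1 + i := by lia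
    rw [hindex]
    simpa [← add_assoc, Nat.cast_add_one_ne_zero] using hcoeff

theorem coeff_derivative_sum_X_mul_pow_mul_pow [CharZero R] [NoZeroDivisors R] {g h : R⟦X⟧}
    (hgh : h * g = 1) (m : ℕ) (a : ℕ → R) :
    coeff (m - 1) (d⁄dX R (∑ i ∈ range m, C (a i) * (X * h) ^ i) * g ^ m) = 0 := by
  rw [map_sum, sum_mul, map_sum]
  refine sum_eq_zero fun i hi ↦ ?_
  rw [← smul_eq_C_mul, Derivation.map_smul, smul_mul_assoc, coeff_smul,
    coeff_derivative_X_mul_pow_mul_pow hgh (mem_range.mp hi), smul_zero]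

end LagrangeInversion

section LagrangeApplication

open PowerSeries

variable {K : Type*} [Field K]

lemma derivative_inv_one_add_X_pow (N : ℕ) :
    d⁄dX K ((1 + X : K⟦X⟧)⁻¹ ^ N) = C (-N : K) * (1 + X)⁻¹ ^ (N + 1) := by
  cases N with
  | zero => simp
  | succ N =>
    simp only [Derivation.leibniz_pow, add_tsub_cancel_right, derivative_inv', map_add, map_neg,
      Derivation.map_one_eq_zero, derivative_X, zero_add, mul_one, smul_eq_mul, nsmul_eq_mul,
      map_natCast]
    ring

lemma sum_mul_inv_one_add_X_pow {N m : ℕ} (hN : 4 * m ≤ N + 1) (a : ℕ → K) :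
    (∑ i ∈ range m, C (a i) * ((1 + X) ^ (N - 4 * i) * (X * (1 - X) ^ 2) ^ i)) * (1 + X)⁻¹ ^ N =
      ∑ i ∈ range m, C (a i) * (X * ((1 - X) ^ 2 * (1 + X : K⟦X⟧)⁻¹ ^ 4)) ^ i := by
  rw [sum_mul]
  refine sum_congr rfl fun i hi ↦ ?_
  have hsplit : N = N - 4 * i + 4 * i := by have := mem_range.mp hi; lia
  have hcancel : (1 + X) ^ (N - 4 * i) * (1 + X : K⟦X⟧)⁻¹ ^ (N - 4 * i) = 1 := by
    rw [← mul_pow, PowerSeries.mul_inv_cancel _ (by simp), one_pow]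
  nth_rw 2 [hsplit]
  rw [pow_add, pow_mul, ← mul_assoc X, mul_pow _ (_ ^ 4)]
  linear_combination C (a i) * (X * (1 - X) ^ 2) ^ i * ((1 + X)⁻¹ ^ 4) ^ i * hcancel

theorem coeff_inv_pow_mul_inv_pow_eq_zero [CharZero K] {N m s : ℕ} (hm : 0 < m)
    (hN : N + 1 = s + 4 * m) (a : ℕ → K)
    (h : (X : K⟦X⟧) ^ (m + 1) ∣
      ∑ i ∈ range m, C (a i) * ((1 + X) ^ (N - 4 * i) * (X * (1 - X) ^ 2) ^ i) - 1) :
    coeff (m - 1) ((1 + X : K⟦X⟧)⁻¹ ^ s * (1 - X)⁻¹ ^ (2 * m)) = 0 := by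
  set V : K⟦X⟧ := ∑ i ∈ range m, C (a i) * ((1 + X) ^ (N - 4 * i) * (X * (1 - X) ^ 2) ^ i)
  set E : K⟦X⟧ := (1 + X)⁻¹
  set G : K⟦X⟧ := (1 - X)⁻¹
  have hE : (1 + X) * E = 1 := PowerSeries.mul_inv_cancel _ (by simp)
  have hG : (1 - X) * G = 1 := PowerSeries.mul_inv_cancel _ (by simp)
  have hgh : (1 - X) ^ 2 * E ^ 4 * ((1 + X) ^ 4 * G ^ 2) = 1 := by
    calc (1 - X) ^ 2 * E ^ 4 * ((1 + X) ^ 4 * G ^ 2)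
        = ((1 + X) * E) ^ 4 * ((1 - X) * G) ^ 2 := by ring
      _ = 1 := by rw [hE, hG, one_pow, one_pow, one_mul]
  have hder : d⁄dX K (E ^ N) * ((1 + X) ^ 4 * G ^ 2) ^ m =
      C (-N : K) * (E ^ s * G ^ (2 * m)) := by
    have hcancel : E ^ (4 * m) * (1 + X) ^ (4 * m) = 1 := by
      rw [← mul_pow, mul_comm, hE, one_pow]
    rw [derivative_inv_one_add_X_pow, hN, pow_add, mul_pow, ← pow_mul, ← pow_mul]
    linear_combination C (-N : K) * (E ^ s * G ^ (2 * m)) * hcancel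
  have hhigh : X ^ m ∣ d⁄dX K (V * E ^ N) - d⁄dX K (E ^ N) := by
    rw [← map_sub, ← sub_one_mul]
    exact X_pow_dvd_derivative (h.mul_right _)
  have hlag := coeff_derivative_sum_X_mul_pow_mul_pow hgh m a
  rw [← sum_mul_inv_one_add_X_pow (N := N) (by lia),
    coeff_eq_of_X_pow_dvd_sub (Nat.sub_one_lt hm.ne')
    (sub_mul (_ : K⟦X⟧) _ _ ▸ hhigh.mul_right _), hder, coeff_C_mul] at hlag
  have hN0 : (-N : K) ≠ 0 := neg_ne_zero.mpr (Nat.cast_ne_zero.mpr (by lia))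
  exact (mul_eq_zero.mp hlag).resolve_left hN0

end LagrangeApplication

section Nonvanishing

open PowerSeries

variable {K : Type*} [Field K] [LinearOrder K] [IsStrictOrderedRing K]

lemma coeff_inv_one_sub_X_pow_pos {r : ℕ} (hr : 0 < r) (j : ℕ) :
    0 < coeff j ((1 - X : K⟦X⟧)⁻¹ ^ r) := by
  obtain ⟨d, rfl⟩ := Nat.exists_eq_add_one.mpr hr
  have hgeom : (1 - X : K⟦X⟧)⁻¹ = PowerSeries.mk 1 :=
    ((PowerSeries.eq_inv_iff_mul_eq_one (by simp)).mpr (mk_one_mul_one_sub_eq_one K)).symm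
  rw [hgeom, mk_one_pow_eq_mk_choose_add, coeff_mk]
  exact Nat.cast_pos.mpr (Nat.choose_pos le_self_add)

lemma coeff_inv_pow_mul_inv_pow_pos {s r : ℕ} (h : s < r) (j : ℕ) :
    0 < coeff j ((1 + X : K⟦X⟧)⁻¹ ^ s * (1 - X)⁻¹ ^ r) := by
  induction s generalizing r j with
  | zero => simpa using coeff_inv_one_sub_X_pow_pos h j
  | succ s ih =>
    obtain ⟨r, rfl⟩ := Nat.exists_eq_add_one.mpr (Nat.zero_lt_of_lt h)
    have hE : (1 + X : K⟦X⟧) * (1 + X)⁻¹ = 1 := PowerSeries.mul_inv_cancel _ (by simp)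
    have hG : (1 - X : K⟦X⟧) * (1 - X)⁻¹ = 1 := PowerSeries.mul_inv_cancel _ (by simp)
    have hrec : (1 + X : K⟦X⟧)⁻¹ ^ (s + 1) * (1 - X)⁻¹ ^ (r + 1) =
        (1 + X)⁻¹ ^ s * (1 - X)⁻¹ ^ r +
          X ^ 2 * ((1 + X)⁻¹ ^ (s + 1) * (1 - X)⁻¹ ^ (r + 1)) := by
      linear_combination (1 + X : K⟦X⟧)⁻¹ ^ s * (1 - X)⁻¹ ^ r * hE +
        (1 + X : K⟦X⟧)⁻¹ ^ s * (1 - X)⁻¹ ^ r * (1 + X) * (1 + X)⁻¹ * hG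
    induction j using Nat.strong_induction_on with
    | _ j ihj =>
      rw [hrec, map_add, coeff_X_pow_mul']
      have hpos := ih (Nat.lt_of_succ_lt_succ h) j
      split_ifs with hj
      · exact add_pos hpos (ihj (j - 2) (by lia))
      · rwa [add_zero]

lemma evalNegHom_inv_pow_mul_inv_pow (s r : ℕ) :
    evalNegHom ((1 + X : K⟦X⟧)⁻¹ ^ s * (1 - X)⁻¹ ^ r) = (1 + X)⁻¹ ^ r * (1 - X)⁻¹ ^ s := by
  have hE : evalNegHom (1 + X : K⟦X⟧)⁻¹ = (1 - X)⁻¹ := by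
    have h := congrArg evalNegHom (PowerSeries.inv_mul_cancel (1 + X : K⟦X⟧) (by simp))
    rw [map_mul, map_add, map_one, evalNegHom_X, ← sub_eq_add_neg] at h
    exact (PowerSeries.eq_inv_iff_mul_eq_one (by simp)).mpr h
  have hG : evalNegHom (1 - X : K⟦X⟧)⁻¹ = (1 + X)⁻¹ := by
    have h := congrArg evalNegHom (PowerSeries.inv_mul_cancel (1 - X : K⟦X⟧) (by simp))
    rw [map_mul, map_sub, map_one, evalNegHom_X, sub_neg_eq_add] at h
    exact (PowerSeries.eq_inv_iff_mul_eq_one (by simp)).mpr h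
  rw [map_mul, map_pow, map_pow, hE, hG, mul_comm]

theorem coeff_inv_pow_mul_inv_pow_ne_zero {s r : ℕ} (h : s ≠ r) (j : ℕ) :
    coeff j ((1 + X : K⟦X⟧)⁻¹ ^ s * (1 - X)⁻¹ ^ r) ≠ 0 := by
  obtain h | h := h.lt_or_gt
  · exact (coeff_inv_pow_mul_inv_pow_pos h j).ne'
  · rw [← evalNegHom_inv_pow_mul_inv_pow, evalNegHom, coeff_rescale]
    exact mul_ne_zero (pow_ne_zero _ (by simp)) (coeff_inv_pow_mul_inv_pow_pos h j).ne'

end Nonvanishing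

section BinaryForms

open Polynomial

variable {R A : Type*} [CommRing R] [CommRing A] [Algebra R A]

/-- The value at `(u, v)` of the binary form of degree `n` which dehomogenises to `p`, that is
`∑ pⱼ uʲ vⁿ⁻ʲ`. It is only meaningful for `p` of degree at most `n`. -/
noncomputable def formEval (n : ℕ) (p : R[X]) (u v : A) : A :=
  MvPolynomial.aeval ![u, v] (p.homogenize n)

lemma formEval_sum {κ : Type*} (n : ℕ) (s : Finset κ) (p : κ → R[X]) (u v : A) :
    formEval n (∑ i ∈ s, p i) u v = ∑ i ∈ s, formEval n (p i) u v := by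
  simp [formEval]

lemma formEval_sub (n : ℕ) (p q : R[X]) (u v : A) :
    formEval n (p - q) u v = formEval n p u v - formEval n q u v := by
  simp [formEval]

lemma formEval_C_mul (n : ℕ) (c : R) (p : R[X]) (u v : A) :
    formEval n (C c * p) u v = algebraMap R A c * formEval n p u v := by
  simp [formEval]

lemma formEval_X_pow {j n : ℕ} (h : j ≤ n) (u v : A) :
    formEval n (X ^ j : R[X]) u v = u ^ j * v ^ (n - j) := by
  simp [formEval, homogenize_X_pow h]

lemma formEval_mul {m n : ℕ} {p q : R[X]} (hp : p.natDegree ≤ m) (hq : q.natDegree ≤ n)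
    (u v : A) : formEval (m + n) (p * q) u v = formEval m p u v * formEval n q u v := by
  simp [formEval, homogenize_mul p q hp hq]

lemma formEval_pow {n : ℕ} {p : R[X]} (hp : p.natDegree ≤ n) (k : ℕ) (u v : A) :
    formEval (n * k) (p ^ k) u v = formEval n p u v ^ k := by
  simpa [formEval, mul_comm] using congrArg (MvPolynomial.aeval ![u, v])
    (homogenize_finsetProd (s := range k) (n := fun _ ↦ n) (p := fun _ ↦ p) fun _ _ ↦ hp)

lemma formEval_eq_sum (n : ℕ) (p : R[X]) (u v : A) :
    formEval n p u v =
      ∑ kl ∈ antidiagonal n, algebraMap R A (p.coeff kl.1) * (u ^ kl.1 * v ^ kl.2) := by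
  simp [formEval, homogenize, MvPolynomial.aeval_monomial, Finsupp.update_eq_add_single,
    Finsupp.prod_add_index', pow_add]

lemma formEval_zero_right (n : ℕ) (p : R[X]) (u : A) :
    formEval n p u 0 = algebraMap R A (p.coeff n) * u ^ n := by
  rw [formEval_eq_sum, sum_eq_single (n, 0)]
  · simp
  · intro kl hkl hne
    have hpos : kl.2 ≠ 0 := fun h ↦ hne (by ext <;> simp_all)
    simp [hpos]
  · simp

lemma map_formEval {B : Type*} [CommRing B] [Algebra R B]
    (φ : A →ₐ[R] B) (n : ℕ) (p : R[X]) (u v : A) :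
    φ (formEval n p u v) = formEval n p (φ u) (φ v) := by
  simp [formEval_eq_sum]

end BinaryForms

section Gleason

open Polynomial

/-- The `i`-th basis polynomial of Gleason's theorem: in degree `N`, it dehomogenises
`(u + v)^(N - 4i) (u v (v - u)^2)^i`, where `u` and `v` stand for squares of the variables of the
weight enumerator. -/
noncomputable def gleasonBasis (R : Type*) [CommRing R] (N i : ℕ) : R[X] :=
  (1 + X) ^ (N - 4 * i) * (X * (1 - X) ^ 2) ^ i

section CommRing

variable {R A : Type*} [CommRing R] [CommRing A] [Algebra R A]

lemma natDegree_X_mul_one_sub_X_sq_le : (X * (1 - X) ^ 2 : R[X]).natDegree ≤ 4 := by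
  compute_degree!

lemma natDegree_X_mul_one_sub_X_sq_pow_le (i : ℕ) :
    ((X * (1 - X) ^ 2 : R[X]) ^ i).natDegree ≤ 4 * i := by
  rw [mul_comm 4]
  exact natDegree_pow_le_of_le i natDegree_X_mul_one_sub_X_sq_le

lemma natDegree_one_add_X_pow_le (n : ℕ) : ((1 + X : R[X]) ^ n).natDegree ≤ n := by
  compute_degree!

lemma natDegree_gleasonBasis_le {N i : ℕ} (hi : 4 * i ≤ N) :
    (gleasonBasis R N i).natDegree ≤ N := by
  have hmul := natDegree_mul_le_of_le (natDegree_one_add_X_pow_le (R := R) (N - 4 * i))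
    (natDegree_X_mul_one_sub_X_sq_pow_le i)
  rwa [tsub_add_cancel_of_le hi] at hmul

lemma formEval_X_mul_one_sub_X_sq (u v : A) :
    formEval 4 (X * (1 - X) ^ 2 : R[X]) u v = u * v * (v - u) ^ 2 := by
  have hX : (X : R[X]).natDegree ≤ 2 := by compute_degree!
  have hsub : (1 - X : R[X]).natDegree ≤ 1 := by compute_degree
  have hsq : ((1 - X) ^ 2 : R[X]).natDegree ≤ 1 * 2 := by compute_degree
  rw [show 4 = 2 + 1 * 2 from rfl, formEval_mul hX hsq, formEval_pow hsub]
  simp [formEval, homogenize_X]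

lemma formEval_gleasonBasis {N i : ℕ} (hi : 4 * i ≤ N) (u v : A) :
    formEval N (gleasonBasis R N i) u v = (u + v) ^ (N - 4 * i) * (u * v * (v - u) ^ 2) ^ i := by
  obtain ⟨M, rfl⟩ := Nat.exists_eq_add_of_le' hi
  have hadd : (1 + X : R[X]).natDegree ≤ 1 := by compute_degree
  have hlinear : formEval (1 * M) ((1 + X : R[X]) ^ M) u v = (u + v) ^ M := by
    rw [formEval_pow hadd]
    simp [formEval, homogenize_X, add_comm]
  rw [one_mul] at hlinear
  rw [gleasonBasis, add_tsub_cancel_right, formEval_mul (natDegree_one_add_X_pow_le M)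
    (natDegree_X_mul_one_sub_X_sq_pow_le i), hlinear,
    formEval_pow natDegree_X_mul_one_sub_X_sq_le, formEval_X_mul_one_sub_X_sq]

/-- `p(x²)` is, up to dehomogenisation, a form of degree `2N` fixed by the MacWilliams transform
`(x, y) ↦ (y - x, y + x) / √2`; this is the property of weight enumerators of self-dual codes of
length `2N` behind Gleason's theorem. -/
structure IsGleasonInvariant (N : ℕ) (p : R[X]) : Prop where
  natDegree_le : p.natDegree ≤ N
  formEval_eq : formEval N p ((1 - X) ^ 2 : R[X]) ((1 + X) ^ 2) = C (2 ^ N) * expand R 2 p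

lemma isGleasonInvariant_gleasonBasis {N i : ℕ} (hi : 4 * i ≤ N) :
    IsGleasonInvariant N (gleasonBasis R N i) where
  natDegree_le := natDegree_gleasonBasis_le hi
  formEval_eq := by
    obtain ⟨M, rfl⟩ := Nat.exists_eq_add_of_le' hi
    rw [formEval_gleasonBasis hi]
    simp only [gleasonBasis, add_tsub_cancel_right, map_mul, map_pow,
      map_add, map_sub, map_one, expand_X]
    calc ((1 - X) ^ 2 + (1 + X) ^ 2) ^ M *
          ((1 - X) ^ 2 * (1 + X) ^ 2 * ((1 + X) ^ 2 - (1 - X) ^ 2) ^ 2) ^ i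
        = (2 * (1 + X ^ 2)) ^ M * (2 ^ 4 * (X ^ 2 * (1 - X ^ 2) ^ 2)) ^ i := by
          congr 2 <;> ring
      _ = C 2 ^ (M + 4 * i) * ((1 + X ^ 2) ^ M * (X ^ 2 * (1 - X ^ 2) ^ 2) ^ i : R[X]) := by
          rw [mul_pow, mul_pow (2 ^ 4), ← pow_mul, pow_add, C_ofNat]
          ring

lemma IsGleasonInvariant.sub {N : ℕ} {p q : R[X]} (hp : IsGleasonInvariant N p)
    (hq : IsGleasonInvariant N q) : IsGleasonInvariant N (p - q) where
  natDegree_le := (natDegree_sub_le p q).trans (max_le hp.natDegree_le hq.natDegree_le)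
  formEval_eq := by
    rw [formEval_sub, hp.formEval_eq, hq.formEval_eq, map_sub, mul_sub]

lemma IsGleasonInvariant.C_mul {N : ℕ} {p : R[X]} (hp : IsGleasonInvariant N p) (c : R) :
    IsGleasonInvariant N (C c * p) where
  natDegree_le := (natDegree_C_mul_le c p).trans hp.natDegree_le
  formEval_eq := by
    rw [formEval_C_mul, hp.formEval_eq, map_mul, expand_C, algebraMap_eq, mul_left_comm]

end CommRing

variable {K : Type*} [Field K] [NeZero (2 : K)]

lemma sq_X_sub_C_dvd_iff {R : Type*} [CommRing R] {p : R[X]} {t : R} :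
    (X - C t) ^ 2 ∣ p ↔ p.IsRoot t ∧ (derivative p).IsRoot t := by
  obtain rfl | hp := eq_or_ne p 0
  · simp
  · rw [← le_rootMultiplicity_iff hp]
    exact one_lt_rootMultiplicity_iff_isRoot hp

lemma one_sub_X_sq_dvd_of_dvd_expand {p : K[X]} (h : (1 - X) ^ 2 ∣ expand K 2 p) :
    (1 - X) ^ 2 ∣ p := by
  rw [sub_sq_comm, ← C_1, sq_X_sub_C_dvd_iff] at h ⊢
  simpa [derivative_expand, expand_eval, NeZero.ne] using h

lemma IsGleasonInvariant.X_mul_one_sub_X_sq_dvd {N : ℕ} {p : K[X]} (hp : IsGleasonInvariant N p)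
    (h0 : p.coeff 0 = 0) : X * (1 - X) ^ 2 ∣ p := by
  obtain rfl | hp0 := eq_or_ne p 0
  · exact dvd_zero _
  have hX : X ∣ p := X_dvd_iff.mpr h0
  have hcoprime : IsCoprime (X : K[X]) ((1 - X) ^ 2) :=
    IsCoprime.pow_right ⟨1, 1, by ring⟩
  refine hcoprime.mul_dvd hX (one_sub_X_sq_dvd_of_dvd_expand ?_)
  obtain ⟨q, rfl⟩ := hX
  have hdegree := hp.natDegree_le
  rw [natDegree_X_mul (right_ne_zero_of_mul hp0), add_comm] at hdegree
  obtain ⟨M, rfl⟩ := Nat.exists_eq_add_of_le hdegree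
  have hunit : IsUnit (C (2 ^ (1 + q.natDegree + M)) : K[X]) :=
    isUnit_C.mpr (pow_ne_zero _ two_ne_zero).isUnit
  rw [← hunit.dvd_mul_left, ← hp.formEval_eq, add_assoc,
    formEval_mul (by compute_degree) le_self_add]
  simp [formEval, homogenize_X]

lemma IsGleasonInvariant.natDegree_lt {N : ℕ} {p : K[X]} (hp : IsGleasonInvariant N p)
    (hp0 : p ≠ 0) (h1 : p.IsRoot 1) : p.natDegree < N := by
  refine hp.natDegree_le.lt_of_ne fun hN ↦ hp0 ?_
  have heval := congrArg (aeval (-1 : K)) hp.formEval_eq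
  have hu : aeval (-1 : K) ((1 - X) ^ 2 : K[X]) = 2 ^ 2 := by
    rw [map_pow, map_sub, map_one, aeval_X]
    norm_num
  have hv : aeval (-1 : K) ((1 + X) ^ 2 : K[X]) = 0 := by simp
  have hexpand : aeval (-1 : K) (expand K 2 p) = 0 := by
    simpa [expand_aeval, coe_aeval_eq_eval] using h1
  rw [map_formEval, hu, hv, formEval_zero_right, map_mul, hexpand, mul_zero] at heval
  rw [← leadingCoeff_eq_zero, leadingCoeff, hN]
  exact (mul_eq_zero.mp heval).resolve_right (pow_ne_zero _ (pow_ne_zero _ two_ne_zero))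

lemma IsGleasonInvariant.of_mul {N : ℕ} {p : K[X]}
    (h : IsGleasonInvariant (4 + N) (X * (1 - X) ^ 2 * p)) (hp : p.natDegree ≤ N) :
    IsGleasonInvariant N p where
  natDegree_le := hp
  formEval_eq := by
    have hfactor : expand K 2 (X * (1 - X) ^ 2 : K[X]) ≠ 0 := by
      rw [Ne, expand_eq_zero two_pos]
      have hsub : (1 - X : K[X]) ≠ 0 := fun h ↦ by simpa using congrArg (eval 0) h
      exact mul_ne_zero X_ne_zero (pow_ne_zero _ hsub)
    have hpow : (C (2 ^ 4) : K[X]) ≠ 0 := C_ne_zero.mpr (pow_ne_zero _ two_ne_zero)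
    have hmul := h.formEval_eq
    have hbase := (isGleasonInvariant_gleasonBasis (R := K) (le_refl (4 * 1))).formEval_eq
    simp only [gleasonBasis, mul_one, tsub_self, pow_zero, one_mul, pow_one] at hbase
    rw [formEval_mul natDegree_X_mul_one_sub_X_sq_le hp, hbase, pow_add, map_mul C,
      map_mul (expand K 2) (X * (1 - X) ^ 2)] at hmul
    apply mul_left_cancel₀ (mul_ne_zero hpow hfactor)
    rw [hmul]
    ring

lemma IsGleasonInvariant.exists_eq_mul {N : ℕ} {p : K[X]} (hp : IsGleasonInvariant N p)
    (hp0 : p ≠ 0) (h0 : p.coeff 0 = 0) :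
    ∃ M q, N = 4 + M ∧ p = X * (1 - X) ^ 2 * q ∧ IsGleasonInvariant M q := by
  obtain ⟨q, rfl⟩ := hp.X_mul_one_sub_X_sq_dvd h0
  have hdegree := hp.natDegree_lt hp0 (by simp)
  have hfactor : (X * (1 - X) ^ 2 : K[X]).natDegree = 3 := by
    compute_degree!
  rw [natDegree_mul (left_ne_zero_of_mul hp0) (right_ne_zero_of_mul hp0), hfactor] at hdegree
  obtain ⟨M, rfl⟩ := Nat.exists_eq_add_of_le (show 4 ≤ N by lia)
  exact ⟨M, q, rfl, rfl, hp.of_mul (by lia)⟩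

lemma gleasonBasis_add_four_succ {R : Type*} [CommRing R] (N i : ℕ) :
    gleasonBasis R (4 + N) (i + 1) = X * (1 - X) ^ 2 * gleasonBasis R N i := by
  have hindex : 4 + N - 4 * (i + 1) = N - 4 * i := by lia
  rw [gleasonBasis, gleasonBasis, hindex, pow_succ]
  ring

theorem IsGleasonInvariant.exists_eq_sum {N : ℕ} {p : K[X]} (hp : IsGleasonInvariant N p) :
    ∃ a : ℕ → K, p = ∑ i ∈ range (N / 4 + 1), C (a i) * gleasonBasis K N i := by
  induction N using Nat.strong_induction_on generalizing p with
  | _ N ih =>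
    have hq : IsGleasonInvariant N (p - C (p.coeff 0) * gleasonBasis K N 0) :=
      hp.sub ((isGleasonInvariant_gleasonBasis (Nat.zero_le N)).C_mul _)
    suffices ∃ b : ℕ → K, p - C (p.coeff 0) * gleasonBasis K N 0 =
        ∑ i ∈ range (N / 4), C (b i) * gleasonBasis K N (i + 1) by
      obtain ⟨b, hb⟩ := this
      refine ⟨fun | 0 => p.coeff 0 | i + 1 => b i, ?_⟩
      rw [sum_range_succ', ← hb]
      exact (sub_add_cancel _ _).symm
    obtain hzero | hne := eq_or_ne (p - C (p.coeff 0) * gleasonBasis K N 0) 0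
    · exact ⟨0, by simp [hzero]⟩
    obtain ⟨M, r, rfl, hr, hrinv⟩ := hq.exists_eq_mul hne
      (by simp [gleasonBasis, coeff_zero_eq_eval_zero])
    obtain ⟨b, rfl⟩ := ih M (by lia) hrinv
    refine ⟨b, ?_⟩
    rw [hr, mul_sum, show (4 + M) / 4 = M / 4 + 1 by lia]
    refine sum_congr rfl fun i _ ↦ ?_
    rw [gleasonBasis_add_four_succ, mul_left_comm]

end Gleason

variable {ι : Type*} [Fintype ι]

section HammingWeight

lemma hWt_eq_zero {c : ι → ZMod 2} : hWt c = 0 ↔ c = 0 := hammingNorm_eq_zero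

lemma hWt_zero : hWt (0 : ι → ZMod 2) = 0 := hammingNorm_zero

lemma hWt_le_card (c : ι → ZMod 2) : hWt c ≤ Fintype.card ι := hammingNorm_le_card_fintype

lemma sum_eq_hWt (c : ι → ZMod 2) : ∑ i, c i = hWt c := by
  rw [hWt, card_eq_sum_ones, sum_filter, Nat.cast_sum]
  refine sum_congr rfl fun i _ ↦ ?_
  generalize c i = a
  fin_cases a <;> rfl

lemma hWt_add_add_two_mul_hWt_mul (c d : ι → ZMod 2) :
    hWt (c + d) + 2 * hWt (c * d) = hWt c + hWt d := by
  simp only [hWt, card_eq_sum_ones, sum_filter, mul_sum, ← sum_add_distrib, Pi.add_apply,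
    Pi.mul_apply]
  refine sum_congr rfl fun i _ ↦ ?_
  generalize c i = a
  generalize d i = b
  fin_cases a <;> fin_cases b <;> rfl

lemma prod_ite_ne_zero {M : Type*} [CommMonoid M] (c : ι → ZMod 2) (x y : M) :
    ∏ i, (if c i ≠ 0 then x else y) = x ^ hWt c * y ^ (Fintype.card ι - hWt c) := by
  classical
  rw [prod_ite, prod_const, prod_const, hWt]
  congr 2
  rw [← card_compl, compl_filter]

end HammingWeight

section MacWilliams

variable {R : Type*} [CommRing R]

/-- The character `a ↦ (-1)^a` of `ZMod 2`. -/
def signChar (R : Type*) [CommRing R] : AddChar (ZMod 2) R :=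
  AddChar.zmodChar 2 (neg_one_sq : (-1 : R) ^ 2 = 1)

lemma signChar_natCast (n : ℕ) : signChar R n = (-1) ^ n :=
  AddChar.zmodChar_apply' _ n

lemma signChar_one : signChar R 1 = -1 := by
  simpa using signChar_natCast (R := R) 1

lemma signChar_eq_one_iff [NeZero (2 : R)] {a : ZMod 2} : signChar R a = 1 ↔ a = 0 := by
  obtain rfl | rfl : a = 0 ∨ a = 1 := by decide +revert
  · simp
  · rw [signChar_one, neg_eq_iff_add_eq_zero, one_add_one_eq_two]
    simp [NeZero.ne]

lemma addChar_sum {κ A M : Type*} [AddCommMonoid A] [CommMonoid M] (ψ : AddChar A M)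
    (s : Finset κ) (f : κ → A) : ψ (∑ i ∈ s, f i) = ∏ i ∈ s, ψ (f i) :=
  map_prod ψ.toMonoidHom (fun i ↦ Multiplicative.ofAdd (f i)) s

lemma sum_pow_hWt_mul_signChar [DecidableEq ι] (c : ι → ZMod 2) (y : R) :
    ∑ v : ι → ZMod 2, y ^ hWt v * signChar R (∑ i, v i * c i) =
      (1 - y) ^ hWt c * (1 + y) ^ (Fintype.card ι - hWt c) := by
  have hcoord (i : ι) : ∑ a : ZMod 2, (if a ≠ 0 then y else 1) * signChar R (a * c i) =
      if c i ≠ 0 then 1 - y else 1 + y := by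
    rw [show (univ : Finset (ZMod 2)) = {0, 1} from rfl, sum_pair zero_ne_one]
    obtain h | h : c i = 0 ∨ c i = 1 := by generalize c i = a; decide +revert
    · simp [h]
    · simp [h, signChar_one, sub_eq_add_neg]
  calc ∑ v : ι → ZMod 2, y ^ hWt v * signChar R (∑ i, v i * c i)
      = ∑ v : ι → ZMod 2, ∏ i, (if v i ≠ 0 then y else 1) * signChar R (v i * c i) := by
        refine sum_congr rfl fun v _ ↦ ?_
        rw [prod_mul_distrib, prod_ite_ne_zero, one_pow, mul_one, addChar_sum]
    _ = ∏ i, ∑ a : ZMod 2, (if a ≠ 0 then y else 1) * signChar R (a * c i) :=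
        (Fintype.prod_sum fun i a ↦ (if a ≠ 0 then y else 1) * signChar R (a * c i)).symm
    _ = (1 - y) ^ hWt c * (1 + y) ^ (Fintype.card ι - hWt c) := by
        simp_rw [hcoord, prod_ite_ne_zero]

/-- The inner product with `v`, as an additive function on the binary code `D`. -/
def innerHom (D : Submodule (ZMod 2) (ι → ZMod 2)) (v : ι → ZMod 2) : D →+ ZMod 2 :=
  (dotProductBilin (ZMod 2) (ZMod 2) v).toAddMonoidHom.comp D.subtype.toAddMonoidHom

lemma innerHom_apply (D : Submodule (ZMod 2) (ι → ZMod 2)) (v : ι → ZMod 2) (c : D) :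
    innerHom D v c = ∑ i, v i * c.1 i :=
  rfl

variable [IsDomain R] [NeZero (2 : R)]

open scoped Classical in
lemma sum_signChar {G : Type*} [AddGroup G] [Fintype G] (f : G →+ ZMod 2) :
    ∑ g, signChar R (f g) = if f = 0 then (Fintype.card G : R) else 0 := by
  have htrivial : (signChar R).compAddMonoidHom f = 0 ↔ f = 0 := by
    simp [signChar_eq_one_iff, DFunLike.ext_iff]
  simpa only [htrivial, AddChar.compAddMonoidHom_apply] using
    AddChar.sum_eq_ite ((signChar R).compAddMonoidHom f)

/-- The right-hand sum runs over a coset of the dual code; the usual identity is `q = 0`. -/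
theorem macWilliams (D : Submodule (ZMod 2) (ι → ZMod 2)) [Fintype D] (q : D →+ ZMod 2) (y : R) :
    ∑ c : D, signChar R (q c) * ((1 - y) ^ hWt c.1 * (1 + y) ^ (Fintype.card ι - hWt c.1)) =
      Fintype.card D * ∑ v ∈ {v | innerHom D v = q}.toFinite.toFinset, y ^ hWt v := by
  classical
  have hinner (v : ι → ZMod 2) : ∑ c : D, signChar R (∑ i, v i * c.1 i + q c) =
      if innerHom D v = q then (Fintype.card D : R) else 0 := by
    simpa [DFunLike.ext_iff, CharTwo.add_eq_zero, innerHom_apply] using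
      sum_signChar (R := R) (innerHom D v + q)
  calc ∑ c : D, signChar R (q c) * ((1 - y) ^ hWt c.1 * (1 + y) ^ (Fintype.card ι - hWt c.1))
      = ∑ v, y ^ hWt v * ∑ c : D, signChar R (∑ i, v i * c.1 i + q c) := by
        simp_rw [← sum_pow_hWt_mul_signChar, mul_sum, AddChar.map_add_eq_mul]
        rw [sum_comm]
        refine sum_congr rfl fun v _ ↦ sum_congr rfl fun c _ ↦ ?_
        ring
    _ = ∑ v with innerHom D v = q, y ^ hWt v * Fintype.card D := by
        simp_rw [hinner, mul_ite, mul_zero, sum_filter]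
    _ = _ := by
        rw [← sum_mul, mul_comm]
        congr 2
        ext v
        simp

end MacWilliams

section SelfDual

variable {D : Submodule (ZMod 2) (ι → ZMod 2)}

lemma SelfDual2.mem_iff (hD : SelfDual2 D) {v : ι → ZMod 2} : v ∈ D ↔ innerHom D v = 0 := by
  simpa [dual2, DFunLike.ext_iff, innerHom_apply] using Set.ext_iff.mp hD v

lemma SelfDual2.even_hWt_mul (hD : SelfDual2 D) {c d : ι → ZMod 2} (hc : c ∈ D) (hd : d ∈ D) :
    Even (hWt (c * d)) := by
  rw [← ZMod.natCast_eq_zero_iff_even, ← sum_eq_hWt]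
  exact DFunLike.congr_fun (hD.mem_iff.mp hc) ⟨d, hd⟩

lemma SelfDual2.even_hWt (hD : SelfDual2 D) {c : ι → ZMod 2} (hc : c ∈ D) : Even (hWt c) := by
  have hidem : c * c = c := by
    ext i
    rw [Pi.mul_apply, ← sq, ZMod.pow_card]
  simpa [hidem] using hD.even_hWt_mul hc hc

/-- Half the Hamming weight modulo `2`, as an additive function on a binary self-dual code. -/
def halfWeightHom (hD : SelfDual2 D) : D →+ ZMod 2 :=
  AddMonoidHom.mk' (fun c ↦ (hWt c.1 / 2 : ℕ)) fun c d ↦ by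
    obtain ⟨k, hk⟩ := hD.even_hWt_mul c.2 d.2
    obtain ⟨l, hl⟩ := hD.even_hWt c.2
    have hadd := hWt_add_add_two_mul_hWt_mul c.1 d.1
    have hhalf : hWt c.1 / 2 + hWt d.1 / 2 = hWt (c.1 + d.1) / 2 + 2 * k := by lia
    rw [← Nat.cast_add, hhalf, Nat.cast_add, Nat.cast_mul, ZMod.natCast_self, zero_mul, add_zero]
    rfl

lemma halfWeightHom_apply (hD : SelfDual2 D) (c : D) :
    halfWeightHom hD c = (hWt c.1 / 2 : ℕ) :=
  rfl

lemma halfWeightHom_eq_zero_iff (hD : SelfDual2 D) {c : D} :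
    halfWeightHom hD c = 0 ↔ 4 ∣ hWt c.1 := by
  obtain ⟨l, hl⟩ := hD.even_hWt c.2
  rw [halfWeightHom_apply, ZMod.natCast_eq_zero_iff]
  lia

/-- The vectors whose inner product with each codeword is half the weight of the codeword modulo
`2`. They form the shadow if the code is singly even, and the code itself if it is doubly even. -/
def parityVectors (hD : SelfDual2 D) : Set (ι → ZMod 2) :=
  {v | innerHom D v = halfWeightHom hD}

lemma eq_of_ker_le_of_ne_zero {G : Type*} [AddGroup G] {f g : G →+ ZMod 2} (hker : g.ker ≤ f.ker)
    (hf : f ≠ 0) : f = g := by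
  have eq_one {a : ZMod 2} (ha : a ≠ 0) : a = 1 := by decide +revert
  obtain ⟨c, hc⟩ := DFunLike.ne_iff.mp hf
  have hgc : g c ≠ 0 := fun h ↦ hc (hker h)
  ext d
  by_cases hd : g d = 0
  · rw [hd, hker hd]
  · have hcd : f (c - d) = 0 := hker (by rw [AddMonoidHom.mem_ker, map_sub, eq_one hgc, eq_one hd,
      sub_self])
    rw [eq_one hd, ← eq_one hc, ← sub_eq_zero, ← map_sub, ← neg_sub, map_neg, hcd, neg_zero]

lemma shadow_eq_parityVectors (hD : SelfDual2 D) (hs : SinglyEven (D : Set (ι → ZMod 2))) :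
    shadow (D : Set (ι → ZMod 2)) = parityVectors hD := by
  ext v
  have hdual : v ∈ dual2 (evenSubcode (D : Set (ι → ZMod 2))) ↔
      (halfWeightHom hD).ker ≤ (innerHom D v).ker := by
    constructor
    · exact fun hv c hc ↦ hv c ⟨c.2, (halfWeightHom_eq_zero_iff hD).mp hc⟩
    · exact fun hker c hc ↦
        hker (x := ⟨c, hc.1⟩) ((halfWeightHom_eq_zero_iff hD).mpr hc.2)
  have hhalf : halfWeightHom hD ≠ 0 := by
    obtain ⟨c, hc, hc4⟩ := hs
    exact fun h ↦ hc4 ((halfWeightHom_eq_zero_iff hD).mp (DFunLike.congr_fun h ⟨c, hc⟩))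
  rw [shadow, Set.mem_sdiff, hdual, SetLike.mem_coe, hD.mem_iff]
  constructor
  · rintro ⟨hker, hne⟩
    exact eq_of_ker_le_of_ne_zero hker hne
  · intro (hv : innerHom D v = halfWeightHom hD)
    rw [hv]
    exact ⟨le_rfl, hhalf⟩

end SelfDual

section WeightEnumerator

open Polynomial

/-- The weight enumerator `∑ X^(wt c)` of a set of binary vectors. -/
noncomputable def weightEnumerator (S : Set (ι → ZMod 2)) : ℚ[X] :=
  ∑ c ∈ S.toFinite.toFinset, X ^ hWt c

/-- The enumerator `∑ X^(wt c / 2)` of half the weights of a set of binary vectors of even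
weight. -/
noncomputable def halfWeightEnumerator (S : Set (ι → ZMod 2)) : ℚ[X] :=
  ∑ c ∈ S.toFinite.toFinset, X ^ (hWt c / 2)

variable {D : Submodule (ZMod 2) (ι → ZMod 2)} {N : ℕ}

lemma SelfDual2.expand_halfWeightEnumerator (hD : SelfDual2 D) :
    expand ℚ 2 (halfWeightEnumerator (D : Set (ι → ZMod 2))) =
      weightEnumerator (D : Set (ι → ZMod 2)) := by
  simp only [halfWeightEnumerator, weightEnumerator, map_sum, map_pow, expand_X]
  refine sum_congr rfl fun c hc ↦ ?_
  rw [← pow_mul, Nat.two_mul_div_two_of_even (hD.even_hWt (by simpa using hc))]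

lemma natDegree_halfWeightEnumerator_le (hN : Fintype.card ι = 2 * N) (S : Set (ι → ZMod 2)) :
    (halfWeightEnumerator S).natDegree ≤ N := by
  refine natDegree_sum_le_of_forall_le _ _ fun c _ ↦ (natDegree_X_pow_le _).trans ?_
  have := hWt_le_card c
  lia

lemma formEval_halfWeightEnumerator {A : Type*} [CommRing A] [Algebra ℚ A]
    (hN : Fintype.card ι = 2 * N) (S : Set (ι → ZMod 2)) (u v : A) :
    formEval N (halfWeightEnumerator S) u v =
      ∑ c ∈ S.toFinite.toFinset, u ^ (hWt c / 2) * v ^ (N - hWt c / 2) := by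
  rw [halfWeightEnumerator, formEval_sum]
  refine sum_congr rfl fun c _ ↦ formEval_X_pow ?_ u v
  have := hWt_le_card c
  lia

lemma SelfDual2.setOf_innerHom_eq_zero (hD : SelfDual2 D) :
    {v | innerHom D v = 0} = (D : Set (ι → ZMod 2)) :=
  Set.ext fun _ ↦ hD.mem_iff.symm

lemma SelfDual2.card_eq (hD : SelfDual2 D) (hN : Fintype.card ι = 2 * N) [Fintype D] :
    Fintype.card D = 2 ^ N := by
  have hmac := macWilliams D 0 (1 : ℤ)
  have hcard : #(D : Set (ι → ZMod 2)).toFinite.toFinset = Fintype.card D := by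
    rw [Set.Finite.card_toFinset]
    rfl
  rw [hD.setOf_innerHom_eq_zero, Fintype.sum_eq_single 0 fun c hc ↦ ?_] at hmac
  · simp only [AddMonoidHom.zero_apply, AddChar.map_zero_eq_one, one_pow, sum_const, hcard,
      Submodule.coe_zero, hWt_zero, hN] at hmac
    rw [← pow_left_inj₀ (Nat.zero_le _) (Nat.zero_le _) two_ne_zero, ← pow_mul', sq]
    norm_num at hmac
    exact_mod_cast hmac.symm
  · have : hWt c.1 ≠ 0 := by simpa [hWt_eq_zero] using hc
    simp [this]

lemma SelfDual2.formEval_halfWeightEnumerator_sq (hD : SelfDual2 D)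
    (hN : Fintype.card ι = 2 * N) (q : D →+ ZMod 2) {ε : ℚ[X]}
    (hq : ∀ c : D, signChar ℚ[X] (q c) = ε ^ (hWt c.1 / 2)) :
    formEval N (halfWeightEnumerator (D : Set (ι → ZMod 2))) (ε * (1 - X) ^ 2) ((1 + X) ^ 2) =
      C (2 ^ N) * weightEnumerator {v | innerHom D v = q} := by
  have := Fintype.ofFinite D
  have hmac := macWilliams D q (X : ℚ[X])
  rw [hD.card_eq hN, Nat.cast_pow, Nat.cast_ofNat] at hmac
  rw [formEval_halfWeightEnumerator hN, sum_subtype _ (p := (· ∈ D)) (by simp), weightEnumerator,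
    map_pow, C_ofNat, ← hmac]
  refine sum_congr rfl fun c _ ↦ ?_
  obtain ⟨l, hl⟩ := hD.even_hWt c.2
  rw [hq, hN, hl, ← two_mul, Nat.mul_div_cancel_left l two_pos, ← Nat.mul_sub, mul_pow, pow_mul,
    pow_mul, mul_assoc]

lemma SelfDual2.isGleasonInvariant (hD : SelfDual2 D) (hN : Fintype.card ι = 2 * N) :
    IsGleasonInvariant N (halfWeightEnumerator (D : Set (ι → ZMod 2))) where
  natDegree_le := natDegree_halfWeightEnumerator_le hN _
  formEval_eq := by
    rw [hD.expand_halfWeightEnumerator, ← hD.setOf_innerHom_eq_zero,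
      ← hD.formEval_halfWeightEnumerator_sq hN 0 (ε := 1) (by simp), one_mul,
      hD.setOf_innerHom_eq_zero]

lemma SelfDual2.formEval_halfWeightEnumerator_neg_sq (hD : SelfDual2 D)
    (hN : Fintype.card ι = 2 * N) :
    formEval N (halfWeightEnumerator (D : Set (ι → ZMod 2))) (-(1 - X) ^ 2) ((1 + X) ^ 2 : ℚ[X]) =
      C (2 ^ N) * weightEnumerator (parityVectors hD) := by
  rw [← neg_one_mul ((1 - X) ^ 2 : ℚ[X])]
  exact hD.formEval_halfWeightEnumerator_sq hN (halfWeightHom hD) fun c ↦ signChar_natCast _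

end WeightEnumerator

section ShadowExpansion

open Polynomial

variable {R : Type*} [CommRing R]

lemma formEval_gleasonBasis_neg_sq {N i : ℕ} (hi : 4 * i ≤ N) :
    formEval N (gleasonBasis R N i) (-(1 - X) ^ 2) ((1 + X) ^ 2 : R[X]) =
      C (4 ^ (N - 4 * i) * (-4) ^ i) * (X ^ (N - 4 * i) * (1 - X ^ 4) ^ (2 * i)) := by
  have hsum : (-(1 - X) ^ 2 + (1 + X) ^ 2 : R[X]) = 4 * X := by ring
  have hprod : (-(1 - X) ^ 2 * (1 + X) ^ 2 * ((1 + X) ^ 2 - -(1 - X) ^ 2) ^ 2 : R[X]) =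
      -4 * (1 - X ^ 4) ^ 2 := by ring
  rw [formEval_gleasonBasis hi, hsum, hprod, mul_pow, mul_pow (-4), ← pow_mul, C_mul, C_pow, C_pow,
    C_neg, C_ofNat]
  ring

lemma coeff_X_pow_mul_one_sub_X_pow_four_pow_eq_zero {d e j : ℕ} (h : ¬ j ≡ d [MOD 4]) :
    (X ^ d * (1 - X ^ 4) ^ e : R[X]).coeff j = 0 := by
  have hexpand : ((1 - X ^ 4) ^ e : R[X]) = expand R 4 ((1 - X) ^ e) := by simp
  rw [coeff_X_pow_mul', hexpand, coeff_expand four_pos]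
  split_ifs with hdj hdvd
  · exact absurd ((Nat.modEq_iff_dvd' hdj).mpr hdvd).symm h
  · rfl
  · rfl

lemma eq_zero_of_coeff_sum_X_pow_mul_eq_zero {m n : ℕ} {d : ℕ → ℕ} {a : ℕ → R} {q : ℕ → R[X]}
    (hd : StrictAntiOn d (Set.Iio n)) (hq : ∀ i, (q i).coeff 0 = 1)
    (h : ∀ i, m ≤ i → i < n → (∑ k ∈ range n, C (a k) * (X ^ d k * q k)).coeff (d i) = 0) {i : ℕ}
    (hmi : m ≤ i) (hin : i < n) : a i = 0 := by
  induction n with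
  | zero => lia
  | succ n ih =>
    have hlast (hmn : m ≤ n) : a n = 0 := by
      have hcoeff := h n hmn n.lt_succ_self
      rw [sum_range_succ, coeff_add, finsetSum_coeff, sum_eq_zero, zero_add] at hcoeff
      · simpa [coeff_C_mul, coeff_X_pow_mul', hq] using hcoeff
      · intro k hk
        rw [mem_range] at hk
        have hlt : d n < d k := hd (Set.mem_Iio.mpr (by lia)) (Set.mem_Iio.mpr n.lt_succ_self) hk
        simp [coeff_X_pow_mul', hlt.not_ge]
    obtain rfl | hne := eq_or_ne i n
    · exact hlast hmi
    · refine ih (hd.mono (Set.Iio_subset_Iio n.le_succ)) (fun k hmk hkn ↦ ?_) (by lia)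
      simpa [sum_range_succ, hlast (by lia)] using h k hmk (by lia)

lemma coeff_weightEnumerator_eq_zero_iff {S : Set (ι → ZMod 2)} {j : ℕ} :
    (weightEnumerator S).coeff j = 0 ↔ ∀ v ∈ S, hWt v ≠ j := by
  simp only [weightEnumerator, finsetSum_coeff, coeff_X_pow]
  rw [sum_eq_zero_iff_of_nonneg fun _ _ ↦ by split_ifs <;> norm_num]
  simp [eq_comm]

variable {D : Submodule (ZMod 2) (ι → ZMod 2)} {N : ℕ}

lemma C_mul_weightEnumerator_parityVectors (hD : SelfDual2 D) (hN : Fintype.card ι = 2 * N)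
    {a : ℕ → ℚ} (ha : halfWeightEnumerator (D : Set (ι → ZMod 2)) =
      ∑ i ∈ range (N / 4 + 1), C (a i) * gleasonBasis ℚ N i) :
    C (2 ^ N) * weightEnumerator (parityVectors hD) = ∑ i ∈ range (N / 4 + 1),
      C (a i * (4 ^ (N - 4 * i) * (-4) ^ i)) * (X ^ (N - 4 * i) * (1 - X ^ 4) ^ (2 * i)) := by
  rw [← hD.formEval_halfWeightEnumerator_neg_sq hN, ha, formEval_sum]
  refine sum_congr rfl fun i hi ↦ ?_
  rw [mem_range] at hi
  rw [formEval_C_mul, formEval_gleasonBasis_neg_sq (by lia), algebraMap_eq, C_mul (a := a i),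
    mul_assoc]

lemma hWt_modEq_of_mem_parityVectors (hD : SelfDual2 D) (hN : Fintype.card ι = 2 * N)
    {v : ι → ZMod 2} (hv : v ∈ parityVectors hD) : hWt v ≡ N [MOD 4] := by
  obtain ⟨a, ha⟩ := (hD.isGleasonInvariant hN).exists_eq_sum
  by_contra hmod
  suffices (C (2 ^ N) * weightEnumerator (parityVectors hD)).coeff (hWt v) = 0 by
    rw [coeff_C_mul, mul_eq_zero_iff_left (by positivity),
      coeff_weightEnumerator_eq_zero_iff] at this
    exact this v hv rfl
  rw [C_mul_weightEnumerator_parityVectors hD hN ha, finsetSum_coeff]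
  refine sum_eq_zero fun i hi ↦ ?_
  rw [mem_range] at hi
  have hmod' : N - 4 * i ≡ N [MOD 4] := by
    rw [Nat.modEq_iff_dvd' (Nat.sub_le _ _)]
    lia
  rw [coeff_C_mul, coeff_X_pow_mul_one_sub_X_pow_four_pow_eq_zero fun h ↦ hmod (h.trans hmod'),
    mul_zero]

lemma halfWeightEnumerator_eq_sum_range (hD : SelfDual2 D) (hN : Fintype.card ι = 2 * N) {m : ℕ}
    (hm : 4 * m ≤ N + 4) (hwt : ∀ v ∈ parityVectors hD, N < hWt v + 4 * m) :
    ∃ a : ℕ → ℚ, halfWeightEnumerator (D : Set (ι → ZMod 2)) =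
      ∑ i ∈ range m, C (a i) * gleasonBasis ℚ N i := by
  obtain ⟨a, ha⟩ := (hD.isGleasonInvariant hN).exists_eq_sum
  refine ⟨a, ha.trans (sum_subset (range_mono (by lia)) fun i hiN him ↦ ?_).symm⟩
  rw [mem_range] at hiN him
  suffices a i * (4 ^ (N - 4 * i) * (-4) ^ i) = 0 by
    rw [(mul_eq_zero_iff_right (by positivity)).mp this, C_0, zero_mul]
  refine eq_zero_of_coeff_sum_X_pow_mul_eq_zero (m := m) (d := fun i ↦ N - 4 * i)
    (q := fun i ↦ (1 - X ^ 4) ^ (2 * i)) (a := fun i ↦ a i * (4 ^ (N - 4 * i) * (-4) ^ i))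
    (fun i _ j hj hij ↦ ?_) (fun i ↦ ?_) (fun i hmi _ ↦ ?_) (by lia) hiN
  · rw [Set.mem_Iio] at hj
    lia
  · simp [coeff_zero_eq_eval_zero]
  · rw [← C_mul_weightEnumerator_parityVectors hD hN ha, coeff_C_mul,
      coeff_weightEnumerator_eq_zero_iff.mpr, mul_zero]
    intro v hv
    have := hwt v hv
    lia

lemma X_pow_dvd_halfWeightEnumerator_sub_one (hD : SelfDual2 D) {m : ℕ}
    (hwt : ∀ c ∈ D, c ≠ 0 → 2 * m < hWt c) :
    X ^ (m + 1) ∣ halfWeightEnumerator (D : Set (ι → ZMod 2)) - 1 := by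
  have hzero : (0 : ι → ZMod 2) ∈ (D : Set (ι → ZMod 2)).toFinite.toFinset := by simp
  rw [halfWeightEnumerator, ← add_sum_erase _ _ hzero, hWt_zero, Nat.zero_div, pow_zero,
    add_sub_cancel_left]
  refine dvd_sum fun c hc ↦ pow_dvd_pow X ?_
  rw [mem_erase, Set.Finite.mem_toFinset] at hc
  obtain ⟨l, hl⟩ := hD.even_hWt hc.2
  have := hwt c hc.2 hc.1
  lia

end ShadowExpansion

section BachocGaborit

variable {D : Submodule (ZMod 2) (ι → ZMod 2)} {N m : ℕ}

theorem exists_mem_parityVectors_hWt_add_le (hD : SelfDual2 D) (hN : Fintype.card ι = 2 * N)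
    (hm : 0 < m) (hmN : 4 * m ≤ N + 1) (hne : N + 1 ≠ 6 * m)
    (hwt : ∀ c ∈ D, c ≠ 0 → 2 * m < hWt c) : ∃ v ∈ parityVectors hD, hWt v + 4 * m ≤ N := by
  by_contra! hparity
  obtain ⟨a, ha⟩ := halfWeightEnumerator_eq_sum_range hD hN (by lia) hparity
  obtain ⟨r, hr⟩ := X_pow_dvd_halfWeightEnumerator_sub_one hD hwt
  have hdvd : (PowerSeries.X : PowerSeries ℚ) ^ (m + 1) ∣ ∑ i ∈ range m, PowerSeries.C (a i) *
      ((1 + PowerSeries.X) ^ (N - 4 * i) *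
        (PowerSeries.X * (1 - PowerSeries.X) ^ 2) ^ i) - 1 := by
    rw [ha] at hr
    refine ⟨r, ?_⟩
    have hcoe := congrArg (Polynomial.coeToPowerSeries.ringHom (R := ℚ)) hr
    rw [map_sub, map_sum] at hcoe
    simpa [gleasonBasis] using hcoe
  exact coeff_inv_pow_mul_inv_pow_ne_zero (by lia) (m - 1)
    (coeff_inv_pow_mul_inv_pow_eq_zero (s := N + 1 - 4 * m) hm (by lia) a hdvd)

end BachocGaborit

section SExtremalCriterion

variable {D : Submodule (ZMod 2) (ι → ZMod 2)} {N m : ℕ}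

lemma minHam_eq_hWt {S : Set (ι → ZMod 2)} {x : ι → ZMod 2} (hx : x ∈ S) (hx0 : x ≠ 0)
    (hle : ∀ y ∈ S, y ≠ 0 → hWt x ≤ hWt y) : minHam S = hWt x := by
  refine IsLeast.csInf_eq ⟨⟨x, hx, hx0, rfl⟩, ?_⟩
  rintro _ ⟨y, hy, hy0, rfl⟩
  exact hle y hy hy0

lemma zero_mem_parityVectors_of_not_singlyEven (hD : SelfDual2 D)
    (hs : ¬ SinglyEven (D : Set (ι → ZMod 2))) : 0 ∈ parityVectors hD := by
  have hhalf : halfWeightHom hD = 0 := by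
    ext c
    rw [AddMonoidHom.zero_apply, halfWeightHom_eq_zero_iff]
    by_contra hc
    exact hs ⟨c, c.2, hc⟩
  exact (hD.mem_iff.mp D.zero_mem).trans hhalf.symm

theorem sExtremal_of_le_hWt (hD : SelfDual2 D) (hN : Fintype.card ι = 2 * N)
    (hm : 0 < m) (hmN : 4 * (m + 1) ≤ N + 1) (hne : N + 1 ≠ 6 * m) (hne' : N + 1 ≠ 6 * (m + 1))
    (hcode : ∀ c ∈ D, c ≠ 0 → 2 * m + 2 ≤ hWt c)
    (hparity : ∀ v ∈ parityVectors hD, N ≤ hWt v + 4 * m) :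
    SExtremal D ∧ minHam (D : Set (ι → ZMod 2)) = 2 * m + 2 := by
  have hparity0 : 0 ∉ parityVectors hD := fun h ↦ by
    have := hparity 0 h
    rw [hWt_zero] at this
    lia
  have hs : SinglyEven (D : Set (ι → ZMod 2)) := by
    by_contra h
    exact hparity0 (zero_mem_parityVectors_of_not_singlyEven hD h)
  obtain ⟨v, hv, hvwt⟩ := exists_mem_parityVectors_hWt_add_le hD hN hm (by lia) hne
    fun c hc hc0 ↦ by have := hcode c hc hc0; lia
  have hshadow : minHam (shadow (D : Set (ι → ZMod 2))) = N - 4 * m := by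
    rw [shadow_eq_parityVectors hD hs, minHam_eq_hWt hv (ne_of_mem_of_not_mem hv hparity0)]
    · have := hparity v hv
      lia
    · intro w hw _
      have := hparity w hw
      lia
  obtain ⟨c, hc, hc0, hcwt⟩ : ∃ c ∈ D, c ≠ 0 ∧ hWt c ≤ 2 * (m + 1) := by
    by_contra! hlarge
    obtain ⟨w, hw, hwwt⟩ :=
      exists_mem_parityVectors_hWt_add_le hD hN m.succ_pos hmN hne' hlarge
    have := hparity w hw
    lia
  have hcode_min : minHam (D : Set (ι → ZMod 2)) = 2 * m + 2 := by
    rw [minHam_eq_hWt hc hc0 fun d hd hd0 ↦ hcwt.trans (hcode d hd hd0)]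
    exact hcwt.antisymm (hcode c hc hc0)
  refine ⟨⟨hD, hs, fun _ ↦ ?_, fun hexceptional ↦ ?_⟩, hcode_min⟩
  · rw [hshadow, hcode_min, hN]
    lia
  · rw [hcode_min, hN] at hexceptional
    lia

end SExtremalCriterion

section Residue

/-- The additive embedding `ZMod 2 → ZMod 4` given by multiplication by `2`. -/
def doubleHom : ZMod 2 →+ ZMod 4 where
  toFun a := if a = 0 then 0 else 2
  map_zero' := rfl
  map_add' := by decide

lemma doubleHom_injective : Function.Injective doubleHom := by
  decide

lemma doubleHom_mul (a : ZMod 2) (x : ZMod 4) :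
    doubleHom a * x = doubleHom (a * ZMod.castHom (by norm_num : 2 ∣ 4) (ZMod 2) x) := by
  decide +revert

lemma leeWt_doubleHom_comp (v : ι → ZMod 2) : leeWt (doubleHom ∘ v) = 2 * hWt v := by
  have hcoord (a : ZMod 2) : leeVal (doubleHom a) = 2 * if a ≠ 0 then 1 else 0 := by
    decide +revert
  simp_rw [leeWt, hWt, card_filter, mul_sum, Function.comp_apply, hcoord]

variable {C : Submodule (ZMod 4) (ι → ZMod 4)}

lemma SelfDualZ4.doubleHom_comp_mem (hC : SelfDualZ4 C) {v : ι → ZMod 2}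
    (hv : v ∈ dual2 (residue (C : Set (ι → ZMod 4)))) : doubleHom ∘ v ∈ C := by
  refine Set.ext_iff.mp hC _ |>.mpr fun x hx ↦ ?_
  calc ∑ i, doubleHom (v i) * x i = doubleHom (∑ i, v i * res2 x i) := by
        simp_rw [doubleHom_mul, map_sum, res2]
    _ = 0 := by rw [hv _ ⟨x, hx, rfl⟩, map_zero]

lemma SelfDualZ4.minLee_le_two_mul_hWt (hC : SelfDualZ4 C) {v : ι → ZMod 2} (hv0 : v ≠ 0)
    (hv : v ∈ dual2 (residue (C : Set (ι → ZMod 4)))) :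
    minLee (C : Set (ι → ZMod 4)) ≤ 2 * hWt v := by
  refine Nat.sInf_le ⟨doubleHom ∘ v, hC.doubleHom_comp_mem hv, fun h ↦ hv0 ?_,
    leeWt_doubleHom_comp v⟩
  exact doubleHom_injective.comp_left (h.trans (by ext; simp))

lemma SelfDualZ4.four_dvd_hWt_of_mem_residue (hC : SelfDualZ4 C) {c : ι → ZMod 2}
    (hc : c ∈ residue (C : Set (ι → ZMod 4))) : 4 ∣ hWt c := by
  obtain ⟨x, hx, rfl⟩ := hc
  have hcoord (a : ZMod 4) :
      a * a = if ZMod.castHom (by norm_num : 2 ∣ 4) (ZMod 2) a ≠ 0 then 1 else 0 := by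
    decide +revert
  have hself : ∑ i, x i * x i = 0 := Set.ext_iff.mp hC x |>.mp hx x hx
  simp_rw [hcoord] at hself
  rwa [← ZMod.natCast_eq_zero_iff, hWt, natCast_card_filter]

variable {D : Submodule (ZMod 2) (ι → ZMod 2)}

lemma mem_dual2_residue_of_mem (hD : SelfDual2 D)
    (hres : residue (C : Set (ι → ZMod 4)) ⊆ D) {c : ι → ZMod 2} (hc : c ∈ D) :
    c ∈ dual2 (residue (C : Set (ι → ZMod 4))) :=
  fun d hd ↦ DFunLike.congr_fun (hD.mem_iff.mp hc) ⟨d, hres hd⟩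

lemma mem_dual2_residue_of_mem_parityVectors (hC : SelfDualZ4 C) (hD : SelfDual2 D)
    (hres : residue (C : Set (ι → ZMod 4)) ⊆ D) {v : ι → ZMod 2} (hv : v ∈ parityVectors hD) :
    v ∈ dual2 (residue (C : Set (ι → ZMod 4))) := fun d hd ↦
  calc ∑ i, v i * d i = halfWeightHom hD ⟨d, hres hd⟩ := DFunLike.congr_fun hv ⟨d, hres hd⟩
    _ = 0 := (halfWeightHom_eq_zero_iff hD).mpr (hC.four_dvd_hWt_of_mem_residue hd)

end Residue

theorem sextremal_of_residue_subset_case2_general {k a b : ℕ}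
    (hab : (a, b) = (14, 6) ∨ (a, b) = (18, 8) ∨ (a, b) = (20, 8))
    (hcard : Fintype.card ι = 24 * k + a) {C : Submodule (ZMod 4) (ι → ZMod 4)}
    (hC : SelfDualZ4 C) (hlee : 8 * k + b ≤ minLee (C : Set (ι → ZMod 4)))
    {D : Submodule (ZMod 2) (ι → ZMod 2)} (hD : SelfDual2 D)
    (hres : residue (C : Set (ι → ZMod 4)) ⊆ D) :
    SExtremal D ∧ minHam (D : Set (ι → ZMod 2)) = 4 * k + 4 := by
  simp only [Prod.mk.injEq] at hab
  obtain ⟨N, hN⟩ : ∃ N, Fintype.card ι = 2 * N := ⟨12 * k + a / 2, by lia⟩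
  have hcode (c) (hc : c ∈ D) (hc0 : c ≠ 0) : 4 * k + 4 ≤ hWt c := by
    have hbound := hC.minLee_le_two_mul_hWt hc0 (mem_dual2_residue_of_mem hD hres hc)
    obtain ⟨l, hl⟩ := hD.even_hWt hc
    lia
  have hparity (v) (hv : v ∈ parityVectors hD) : N ≤ hWt v + 4 * (2 * k + 1) := by
    have hmod : hWt v % 4 = N % 4 := hWt_modEq_of_mem_parityVectors hD hN hv
    have hv0 : v ≠ 0 := by
      rintro rfl
      rw [hWt_zero] at hmod
      lia
    have hbound :=
      hC.minLee_le_two_mul_hWt hv0 (mem_dual2_residue_of_mem_parityVectors hC hD hres hv)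
    lia
  convert sExtremal_of_le_hWt (m := 2 * k + 1) hD hN (by lia) (by lia) (by lia) (by lia)
    (fun c hc hc0 ↦ (hcode c hc hc0).trans' (by lia)) hparity using 2
  lia

end Z4Note

open Z4Note in
/-- for `(α,β) ∈ {(14,6),(18,8),(20,8)}`, any binary self-dual code
containing the residue code of a self-dual `ZMod 4`-code of length `24k+α` and minimum
Lee weight `8k+β` is s-extremal with minimum weight `4k+4`. -/
theorem sextremal_of_residue_subset_case2
    (k : ℕ) (hk : 0 < k) (a b : ℕ)
    (hab : (a, b) = (14, 6) ∨ (a, b) = (18, 8) ∨ (a, b) = (20, 8))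
    (C : Submodule (ZMod 4) (Fin (24 * k + a) → ZMod 4))
    (hsd : SelfDualZ4 C)
    (hlee : minLee (C : Set (Fin (24 * k + a) → ZMod 4)) = 8 * k + b) :
    ∀ D : Submodule (ZMod 2) (Fin (24 * k + a) → ZMod 2),
      SelfDual2 D →
      residue (C : Set (Fin (24 * k + a) → ZMod 4)) ⊆ (D : Set (Fin (24 * k + a) → ZMod 2)) →
      SExtremal D ∧ minHam (D : Set (Fin (24 * k + a) → ZMod 2)) = 4 * k + 4 :=
  fun _ hD hres ↦
    sextremal_of_residue_subset_case2_general hab (Fintype.card_fin _) hsd hlee.ge hD hres
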